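/- Let E be a finite-dimensional real inner product space, K ⊆ E a nonempty compact set, x ∈ E, and 0 < a < d_K(x). Let K_a = {y ∈ E : d_K(y) ≤ a} be the a-offset (a nonempty compact set). Then d_{K_a}(x) = d_K(x) − a, and for every μ ∈ [0,1], x is a μ-critical point of d_{K_a} if and only if x is a μ-critical point of d_K. -/

import Mathlib

open Metric

/-!
Let `d = d_K(x)` and `r = 1 - a / d`. If `y` is a point of the offset `K_a` nearest to `x` and `q`
is a point of `K` nearest to `y`, then `d ≤ |x - q| ≤ |x - y| + |y - q| ≤ (d - a) + a`, so `q` is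
nearest to `x` in `K` and, by strict convexity, `y` lies on the segment from `x` to `q`. Hence the
homothety with centre `x` and ratio `r` maps the nearest points in `K` onto those in `K_a`. It
commutes with convex hulls and multiplies distances from `x` by `r`, so both sides of the inequality
defining `μ`-criticality get multiplied by `r > 0`.
-/

section PseudoMetricSpace

variable {X : Type*} [PseudoMetricSpace X] {K : Set X} {x y q : X} {a : ℝ}

/-- The set `Γ_K(x)` of points of `K` nearest to `x`. -/
def nearestPoints (K : Set X) (x : X) : Set X :=
  {q ∈ K | dist x q = infDist x K}

/-- Proximinal sets: those in which every point of the space has a nearest point. Nonempty compact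
sets are proximinal, and so are nonempty closed sets in proper spaces. -/
def IsProximinal (K : Set X) : Prop :=
  ∀ x, (nearestPoints K x).Nonempty

theorem isProximinal_of_isCompact (hK : IsCompact K) (hne : K.Nonempty) : IsProximinal K := fun x ↦
  let ⟨q, hq, hxq⟩ := hK.exists_infDist_eq_dist hne x
  ⟨q, hq, hxq.symm⟩

theorem IsProximinal.nonempty [Nonempty X] (hK : IsProximinal K) : K.Nonempty :=
  let ⟨x⟩ := ‹Nonempty X›
  (hK x).mono (Set.sep_subset _ _)

theorem mem_cthickening_iff_infDist_le (hK : K.Nonempty) (ha : 0 ≤ a) :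
    x ∈ cthickening a K ↔ infDist x K ≤ a :=
  ENNReal.le_ofReal_iff_toReal_le (infEDist_ne_top hK) ha

theorem mem_nearestPoints_of_dist_add_infDist_le (hq : q ∈ nearestPoints K y)
    (h : dist x y + infDist y K ≤ infDist x K) : q ∈ nearestPoints K x := by
  refine ⟨hq.1, le_antisymm ?_ (infDist_le_dist_of_mem hq.1)⟩
  calc dist x q ≤ dist x y + dist y q := dist_triangle x y q
    _ = dist x y + infDist y K := by rw [hq.2]
    _ ≤ infDist x K := h

end PseudoMetricSpace

theorem infDist_image_homothety {𝕜 V P : Type*} [NormedField 𝕜] [SeminormedAddCommGroup V]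
    [NormedSpace 𝕜 V] [PseudoMetricSpace P] [NormedAddTorsor V P] (x : P) (r : 𝕜) (s : Set P) :
    infDist x (AffineMap.homothety x r '' s) = ‖r‖ * infDist x s := by
  simp only [infDist_eq_iInf, Real.mul_iInf_of_nonneg (norm_nonneg r), ← dist_center_homothety]
  exact (Set.imageFactorization_surjective.iInf_comp fun y ↦ dist x y.1).symm

theorem infDist_cthickening {E : Type*} [SeminormedAddCommGroup E] [NormedSpace ℝ E] {K : Set E}
    {x : E} {a : ℝ} (hK : K.Nonempty) (ha : 0 ≤ a) (hax : a ≤ infDist x K) :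
    infDist x (cthickening a K) = infDist x K - a := by
  have hle : ENNReal.ofReal a ≤ infEDist x K := ENNReal.ofReal_le_of_le_toReal hax
  rw [infDist, infEDist_cthickening, ENNReal.toReal_sub_of_le hle (infEDist_ne_top hK),
    ENNReal.toReal_ofReal ha, infDist]

section NormedSpace

variable {E : Type*} [NormedAddCommGroup E] [NormedSpace ℝ E] {K : Set E} {x q : E} {a : ℝ}

/-- `x` is a `μ`-critical point of the distance function to `K`. The requirement `x ∉ K` is not
part of the definition. -/
def IsMuCritical (μ : ℝ) (K : Set E) (x : E) : Prop :=
  infDist x (convexHull ℝ (nearestPoints K x)) ≤ μ * infDist x K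

theorem homothety_mem_nearestPoints_cthickening (ha : 0 ≤ a) (hax : a < infDist x K)
    (hq : q ∈ nearestPoints K x) :
    AffineMap.homothety x (1 - a / infDist x K) q ∈ nearestPoints (cthickening a K) x := by
  have hd : 0 < infDist x K := ha.trans_lt hax
  have hr : 0 ≤ 1 - a / infDist x K := sub_nonneg.2 ((div_le_one hd).2 hax.le)
  constructor
  · refine mem_cthickening_of_dist_le _ q a K hq.1 (le_of_eq ?_)
    rw [dist_homothety_self, hq.2, sub_sub_cancel, Real.norm_of_nonneg (by positivity),
      div_mul_cancel₀ a hd.ne']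
  · rw [dist_center_homothety, hq.2, infDist_cthickening ⟨q, hq.1⟩ ha hax.le,
      Real.norm_of_nonneg hr, sub_mul, one_mul, div_mul_cancel₀ a hd.ne']

variable [StrictConvexSpace ℝ E]

theorem nearestPoints_cthickening (hK : IsProximinal K) (ha : 0 ≤ a) (hax : a < infDist x K) :
    nearestPoints (cthickening a K) x =
      AffineMap.homothety x (1 - a / infDist x K) '' nearestPoints K x := by
  have hd : infDist x K ≠ 0 := (ha.trans_lt hax).ne'
  refine Set.Subset.antisymm (fun y ⟨hya, hxy⟩ ↦ ?_) <| Set.image_subset_iff.2 fun _ ↦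
    homothety_mem_nearestPoints_cthickening ha hax
  replace hya : infDist y K ≤ a := (mem_cthickening_iff_infDist_le hK.nonempty ha).1 hya
  replace hxy : dist x y = infDist x K - a :=
    hxy.trans (infDist_cthickening hK.nonempty ha hax.le)
  have hyK : infDist y K = a := by
    linarith [infDist_le_infDist_add_dist (s := K) (x := x) (y := y)]
  obtain ⟨q, hq⟩ := hK y
  have hqx : q ∈ nearestPoints K x := mem_nearestPoints_of_dist_add_infDist_le hq (by linarith)
  refine ⟨q, hqx, ?_⟩
  rw [AffineMap.homothety_eq_lineMap]
  refine (eq_lineMap_of_dist_eq_mul_of_dist_eq_mul ?_ ?_).symm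
  · rw [hxy, hqx.2, sub_mul, one_mul, div_mul_cancel₀ a hd]
  · rw [hq.2, hyK, hqx.2, sub_sub_cancel, div_mul_cancel₀ a hd]

theorem isMuCritical_cthickening_iff (hK : IsProximinal K) (ha : 0 ≤ a) (hax : a < infDist x K)
    (μ : ℝ) : IsMuCritical μ (cthickening a K) x ↔ IsMuCritical μ K x := by
  have hd : 0 < infDist x K := ha.trans_lt hax
  have hr : 0 < 1 - a / infDist x K := sub_pos.2 ((div_lt_one hd).2 hax)
  have hrd : infDist x K - a = (1 - a / infDist x K) * infDist x K := by
    rw [sub_mul, one_mul, div_mul_cancel₀ a hd.ne']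
  rw [IsMuCritical, IsMuCritical, nearestPoints_cthickening hK ha hax,
    ← AffineMap.image_convexHull, infDist_image_homothety, Real.norm_of_nonneg hr.le,
    infDist_cthickening hK.nonempty ha hax.le, hrd, mul_left_comm, mul_le_mul_iff_right₀ hr]

theorem stmt18_general (hK : IsProximinal K) (ha : 0 ≤ a) (hax : a < infDist x K) :
    infDist x (cthickening a K) = infDist x K - a ∧
      ∀ μ : ℝ, IsMuCritical μ (cthickening a K) x ↔ IsMuCritical μ K x :=
  ⟨infDist_cthickening hK.nonempty ha hax.le,
    isMuCritical_cthickening_iff hK ha hax⟩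

end NormedSpace

/-- Passing to an offset shifts the distance function and preserves μ-criticality:
if `0 < a < d_K(x)` then `d_{K_a}(x) = d_K(x) − a`, and `x` is μ-critical for `d_{K_a}`
iff `x` is μ-critical for `d_K`. -/
theorem stmt18 {E : Type*} [NormedAddCommGroup E] [InnerProductSpace ℝ E]
    [FiniteDimensional ℝ E]
    (K : Set E) (hKne : K.Nonempty) (hKc : IsCompact K)
    (x : E) (a : ℝ) (ha : 0 < a) (hax : a < infDist x K) :
    infDist x {y : E | infDist y K ≤ a} = infDist x K - a ∧
    ∀ μ ∈ Set.Icc (0 : ℝ) 1,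
      (infDist x (convexHull ℝ {q ∈ {y : E | infDist y K ≤ a} |
          dist x q = infDist x {y : E | infDist y K ≤ a}}) ≤
        μ * infDist x {y : E | infDist y K ≤ a} ↔
      infDist x (convexHull ℝ {q ∈ K | dist x q = infDist x K}) ≤ μ * infDist x K) := by
  have hoffset : {y : E | infDist y K ≤ a} = cthickening a K :=
    Set.ext fun _ ↦ (mem_cthickening_iff_infDist_le hKne ha.le).symm
  rw [hoffset]
  exact (stmt18_general (isProximinal_of_isCompact hKc hKne) ha.le hax).imp_right fun h μ _ ↦ h μ
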